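/- Let n ≥ 2 be an integer and let γ : I → ℝ² be a four times continuously differentiable unit-speed curve on an open interval I satisfying ⟨γ(s), γ''(s)⟩ = -n for all s ∈ I, and let κ(s) = det(γ'(s), γ''(s)) be its signed curvature. Then κ(s) ≠ 0 for every s ∈ I, and n (κ(s) κ''(s) - 3 κ'(s)²) = (n-1) κ(s)⁴ for all s ∈ I. -/

import Mathlib

open scoped RealInnerProductSpace

/-!
Let `T = γ'` and let `N` be the tangent rotated by a right angle. Decompose the position vector as
`γ = τ T + p N`. Since `γ'' = κ N`, the condition `⟨γ, γ''⟩ = -c` reads `κ p = -c`, so `κ` vanishes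
nowhere when `c ≠ 0`. The Frenet equations give `p' = -κ τ` and `τ' = 1 - c`. Differentiating
`κ = -c / p` yields `κ' = -κ³ τ / c`, so `κ` is twice differentiable as soon as `γ` is, and
differentiating once more gives the equation.
-/

open Filter Module Topology
open scoped EuclideanSpace

section InnerProductSpace

variable {E : Type*} [NormedAddCommGroup E] [InnerProductSpace ℝ E]

theorem inner_eq_zero_of_hasDerivAt_of_norm_eventually_const {f : ℝ → E} {f' : E} {s r : ℝ}
    (hf : HasDerivAt f f' s) (hr : ∀ᶠ t in 𝓝 s, ‖f t‖ = r) : ⟪f s, f'⟫ = 0 := by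
  have hconst : (fun t => ‖f t‖ ^ 2) =ᶠ[𝓝 s] fun _ => r ^ 2 := hr.mono fun t ht => by
    simp only [ht]
  have hzero : 2 * ⟪f s, f'⟫ = 0 :=
    hf.norm_sq.unique ((hasDerivAt_const s (r ^ 2)).congr_of_eventuallyEq hconst)
  linarith

/-- The component of the position vector of a unit-speed curve along its tangent. -/
noncomputable def tangentialComponent (γ : ℝ → E) (s : ℝ) : ℝ :=
  ⟪deriv γ s, γ s⟫

theorem hasDerivAt_tangentialComponent {γ : ℝ → E} {s : ℝ} (hγ : DifferentiableAt ℝ γ s)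
    (hγ' : DifferentiableAt ℝ (deriv γ) s) :
    HasDerivAt (tangentialComponent γ) (‖deriv γ s‖ ^ 2 + ⟪γ s, deriv (deriv γ) s⟫) s := by
  rw [← real_inner_self_eq_norm_sq, real_inner_comm (deriv (deriv γ) s)]
  exact hγ'.hasDerivAt.inner ℝ hγ.hasDerivAt

end InnerProductSpace

section OrientedPlane

theorem areaForm_basisFun_orientation (x y : EuclideanSpace ℝ (Fin 2)) :
    (EuclideanSpace.basisFun (Fin 2) ℝ).toBasis.orientation.areaForm x y =
      Matrix.det !![x 0, y 0; x 1, y 1] := by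
  rw [Orientation.areaForm_to_volumeForm,
    Orientation.volumeForm_robust _ (EuclideanSpace.basisFun (Fin 2) ℝ) rfl, Basis.det_apply]
  simp [Matrix.det_fin_two, Basis.toMatrix_apply]

variable {E : Type*} [NormedAddCommGroup E] [InnerProductSpace ℝ E] [Fact (finrank ℝ E = 2)]
  (o : Orientation ℝ E (Fin 2))

/-- The signed curvature of a unit-speed curve in an oriented Euclidean plane. It lacks the factor
`‖γ'‖⁻³` that curves of arbitrary speed require. -/
noncomputable def signedCurvature (γ : ℝ → E) (s : ℝ) : ℝ :=
  o.areaForm (deriv γ s) (deriv (deriv γ) s)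

/-- The support function of a unit-speed curve in an oriented Euclidean plane: the component of the
position vector along the normal `J T`, where `T` is the tangent and `J` the rotation by a right
angle, so that `⟪J T, x⟫ = o.areaForm T x`. -/
noncomputable def supportFunction (γ : ℝ → E) (s : ℝ) : ℝ :=
  o.areaForm (deriv γ s) (γ s)

variable {γ : ℝ → E} {s : ℝ}

theorem signedCurvature_mul_supportFunction (hunit : ‖deriv γ s‖ = 1)
    (horth : ⟪deriv γ s, deriv (deriv γ) s⟫ = 0) :
    signedCurvature o γ s * supportFunction o γ s = ⟪γ s, deriv (deriv γ) s⟫ := by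
  have h := o.inner_mul_inner_add_areaForm_mul_areaForm (deriv γ s) (γ s) (deriv (deriv γ) s)
  rw [horth, hunit] at h
  rw [signedCurvature, supportFunction]
  linarith

theorem hasDerivAt_supportFunction (hγ : DifferentiableAt ℝ γ s)
    (hγ' : DifferentiableAt ℝ (deriv γ) s) (hunit : ‖deriv γ s‖ = 1)
    (horth : ⟪deriv γ s, deriv (deriv γ) s⟫ = 0) :
    HasDerivAt (supportFunction o γ) (-(signedCurvature o γ s * tangentialComponent γ s)) s := by
  have hderiv : HasDerivAt (supportFunction o γ)
      (o.areaForm (deriv γ s) (deriv γ s) + o.areaForm (deriv (deriv γ) s) (γ s)) s :=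
    o.areaForm'.hasDerivAt_of_bilinear (fun _ => hγ'.hasDerivAt) (fun _ => hγ.hasDerivAt)
  have hframe := o.inner_mul_areaForm_sub (deriv γ s) (γ s) (deriv (deriv γ) s)
  rw [horth, hunit] at hframe
  convert hderiv using 1
  rw [signedCurvature, tangentialComponent, o.areaForm_apply_self,
    o.areaForm_swap (deriv (deriv γ) s)]
  linarith

end OrientedPlane

section NontriviallyNormedField

variable {𝕜 : Type*} [NontriviallyNormedField 𝕜] {f g : 𝕜 → 𝕜} {x : 𝕜}

theorem hasDerivAt_of_mul_eventually_eq_const {g' k : 𝕜} (hk : k ≠ 0)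
    (hmul : ∀ᶠ y in 𝓝 x, f y * g y = k) (hg : HasDerivAt g g' x) :
    HasDerivAt f (-(f x ^ 2 * g' / k)) x := by
  have hx : f x * g x = k := hmul.self_of_nhds
  have hfx : f x ≠ 0 := left_ne_zero_of_mul (hx ▸ hk)
  have hgx : g x ≠ 0 := right_ne_zero_of_mul (hx ▸ hk)
  have hf : f =ᶠ[𝓝 x] fun y => k * (g y)⁻¹ := by
    filter_upwards [hmul, hg.continuousAt.eventually_ne hgx] with y hy hgy
    rw [← hy, mul_inv_cancel_right₀ hgy]
  refine (((hg.fun_inv hgx).const_mul k).congr_of_eventuallyEq hf).congr_deriv ?_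
  rw [← hx]
  field_simp

theorem mul_deriv_deriv_sub_three_mul_deriv_sq {g' : 𝕜}
    (hf : ∀ᶠ y in 𝓝 x, HasDerivAt f (f y ^ 3 * g y) y) (hg : HasDerivAt g g' x) :
    f x * deriv (deriv f) x - 3 * deriv f x ^ 2 = g' * f x ^ 4 := by
  have hf' : deriv f =ᶠ[𝓝 x] fun y => f y ^ 3 * g y := hf.mono fun y hy => hy.deriv
  have hf'' : deriv (deriv f) x = 3 * f x ^ 2 * (f x ^ 3 * g x) * g x + f x ^ 3 * g' := by
    rw [hf'.deriv_eq]
    exact ((hf.self_of_nhds.fun_pow 3).fun_mul hg).deriv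
  rw [hf'', hf'.self_of_nhds]
  ring

end NontriviallyNormedField

theorem stmt9_general {E : Type*} [NormedAddCommGroup E] [InnerProductSpace ℝ E]
    [Fact (finrank ℝ E = 2)] (o : Orientation ℝ E (Fin 2)) {c : ℝ} (hc : c ≠ 0) {I : Set ℝ}
    (hI : IsOpen I) {γ : ℝ → E} (hunit : ∀ s ∈ I, ‖deriv γ s‖ = 1)
    (hinc : ∀ s ∈ I, ⟪γ s, deriv (deriv γ) s⟫ = -c) :
    ∀ s ∈ I, signedCurvature o γ s ≠ 0 ∧
      c * (signedCurvature o γ s * deriv (deriv (signedCurvature o γ)) s -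
        3 * deriv (signedCurvature o γ) s ^ 2) = (c - 1) * signedCurvature o γ s ^ 4 := by
  have hγ : ∀ s ∈ I, DifferentiableAt ℝ γ s := fun s hs =>
    differentiableAt_of_deriv_ne_zero <| norm_ne_zero_iff.mp <| hunit s hs ▸ one_ne_zero
  have hγ' : ∀ s ∈ I, DifferentiableAt ℝ (deriv γ) s := fun s hs =>
    differentiableAt_of_deriv_ne_zero fun h0 => hc <| by simpa [h0] using hinc s hs
  have horth : ∀ s ∈ I, ⟪deriv γ s, deriv (deriv γ) s⟫ = 0 := fun s hs =>
    inner_eq_zero_of_hasDerivAt_of_norm_eventually_const (hγ' s hs).hasDerivAt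
      (eventually_of_mem (hI.mem_nhds hs) hunit)
  have hmul : ∀ s ∈ I, signedCurvature o γ s * supportFunction o γ s = -c := fun s hs =>
    (signedCurvature_mul_supportFunction o (hunit s hs) (horth s hs)).trans (hinc s hs)
  have hκ : ∀ s ∈ I, HasDerivAt (signedCurvature o γ)
      (signedCurvature o γ s ^ 3 * (tangentialComponent γ s / -c)) s := fun s hs =>
    (hasDerivAt_of_mul_eventually_eq_const (neg_ne_zero.mpr hc)
      (eventually_of_mem (hI.mem_nhds hs) hmul)
      (hasDerivAt_supportFunction o (hγ s hs) (hγ' s hs) (hunit s hs) (horth s hs))).congr_deriv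
      (by ring)
  have hτ : ∀ s ∈ I, HasDerivAt (tangentialComponent γ) (1 - c) s := fun s hs => by
    simpa only [hunit s hs, hinc s hs, one_pow, ← sub_eq_add_neg] using
      hasDerivAt_tangentialComponent (hγ s hs) (hγ' s hs)
  intro s hs
  refine ⟨left_ne_zero_of_mul (hmul s hs ▸ neg_ne_zero.mpr hc), ?_⟩
  rw [mul_deriv_deriv_sub_three_mul_deriv_sq (eventually_of_mem (hI.mem_nhds hs) hκ)
    ((hτ s hs).div_const (-c))]
  field_simp
  ring

/-- For a C⁴ unit-speed planar curve `γ` on an open interval `I` with `⟨γ, γ''⟩ ≡ -n`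
(`n ≥ 2`), the signed curvature `κ = det(γ', γ'')` is nowhere zero on `I` and satisfies
the ODE `n(κκ'' - 3κ'²) = (n-1)κ⁴` on `I`. -/
theorem stmt9 (n : ℕ) (hn : 2 ≤ n) (I : Set ℝ) (hI : IsOpen I) (hI' : I.OrdConnected)
    (γ : ℝ → EuclideanSpace ℝ (Fin 2)) (hγ : ContDiffOn ℝ 4 γ I)
    (hunit : ∀ s ∈ I, ‖deriv γ s‖ = 1)
    (hinc : ∀ s ∈ I, ⟪γ s, deriv (deriv γ) s⟫ = -(n : ℝ))
    (κ : ℝ → ℝ)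
    (hκ : ∀ s : ℝ, κ s =
      Matrix.det !![deriv γ s 0, deriv (deriv γ) s 0;
                    deriv γ s 1, deriv (deriv γ) s 1]) :
    ∀ s ∈ I, κ s ≠ 0 ∧
      (n : ℝ) * (κ s * deriv (deriv κ) s - 3 * deriv κ s ^ 2) = ((n : ℝ) - 1) * κ s ^ 4 := by
  obtain rfl := funext fun s => (hκ s).trans (areaForm_basisFun_orientation _ _).symm
  exact stmt9_general _ (by positivity) hI hunit hinc
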